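/- arXiv:1710.10627 — 8 statements merged into one kernel-verified Lean document; each statement's English description precedes it below -/
import Mathlib

section
/- (Lemma 2.1 of the paper.) Under the stated hypotheses, (φ∘S)∘(φ∘S) = (S∘φ)∘(S∘φ) as linear maps of T (equation (16) of the paper). -/
open RealInnerProductSpace

theorem stmt6 {V : Type*} [NormedAddCommGroup V] [InnerProductSpace ℝ V]
    [FiniteDimensional ℝ V]
    (m : ℕ) (hm : 3 ≤ m) (hdim : Module.finrank ℝ V = 2 * m)
    (J : V →ₗ[ℝ] V)
    (hJiso : ∀ x y : V, ⟪J x, J y⟫ = ⟪x, y⟫)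
    (hJ2 : ∀ x : V, J (J x) = -x)
    (A : V →ₗ[ℝ] V)
    (hAsa : ∀ x y : V, ⟪A x, y⟫ = ⟪x, A y⟫)
    (hA2 : ∀ x : V, A (A x) = x)
    (hAJ : ∀ x : V, A (J x) = -(J (A x)))
    (N : V) (hN : ‖N‖ = 1)
    (ξ : V) (hξ : ξ = -(J N))
    (η : V → ℝ) (hη : ∀ X : V, η X = ⟪X, ξ⟫)
    (φ : V → V) (hφ : ∀ X : V, φ X = J X - η X • N)
    (S : V →ₗ[ℝ] V)
    (hST : ∀ X : V, ⟪X, N⟫ = 0 → ⟪S X, N⟫ = 0)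
    (hSsa : ∀ X Y : V, ⟪X, N⟫ = 0 → ⟪Y, N⟫ = 0 → ⟪S X, Y⟫ = ⟪X, S Y⟫)
    (hANξ : ⟪A N, ξ⟫ = 0)
    (α : ℝ) (hHopfξ : S ξ = α • ξ)
    (hHopf : ∀ X Y : V, ⟪X, N⟫ = 0 → ⟪Y, N⟫ = 0 →
      2 * ⟪S (φ (S X)), Y⟫ - α * ⟪φ (S X) + S (φ X), Y⟫ - 2 * ⟪φ X, Y⟫
        + 2 * ⟪X, A N⟫ * ⟪Y, A ξ⟫ - 2 * ⟪Y, A N⟫ * ⟪X, A ξ⟫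
        + 2 * ⟪ξ, A ξ⟫ * (⟪Y, A N⟫ * η X - ⟪X, A N⟫ * η Y) = 0)
    :
    ∀ X : V, ⟪X, N⟫ = 0 → φ (S (φ (S X))) = S (φ (S (φ X))) := by
  have hNN : ⟪N, N⟫ = 1 := by rw [real_inner_self_eq_norm_sq, hN]; norm_num
  have hJN : J N = -ξ := by rw [hξ, neg_neg]
  have hJξ : J ξ = N := by rw [hξ, map_neg, hJ2, neg_neg]
  have hJs : ∀ x y : V, ⟪J x, y⟫ = -⟪x, J y⟫ := by
    intro x y
    have h := hJiso (J x) y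
    rw [hJ2, inner_neg_left] at h
    linarith
  have hφN : ∀ x : V, ⟪φ x, N⟫ = 0 := by
    intro x
    rw [hφ, hη, inner_sub_left, hJs, hJN, inner_neg_right, inner_smul_left, hNN]
    simp
  have hφadd : ∀ x y : V, φ (x + y) = φ x + φ y := by
    intro x y
    simp only [hφ, hη, map_add, inner_add_left, add_smul]; abel
  have hφsmul : ∀ (r : ℝ) (x : V), φ (r • x) = r • φ x := by
    intro r x
    simp only [hφ, hη, map_smul, real_inner_smul_left, mul_smul, smul_sub]
  have hφsub : ∀ x y : V, φ (x - y) = φ x - φ y := by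
    intro x y
    simp only [hφ, hη, map_sub, inner_sub_left, sub_smul]; abel
  have hNξ : ⟪N, ξ⟫ = 0 := by
    have h1 := hJs N N
    rw [hJN, inner_neg_left, inner_neg_right, real_inner_comm] at h1
    linarith
  have hξN : ⟪ξ, N⟫ = 0 := by rw [real_inner_comm]; exact hNξ
  have hξξ : ⟪ξ, ξ⟫ = 1 := by
    rw [hξ, inner_neg_left, inner_neg_right, neg_neg, hJiso, hNN]
  have hφξ : ∀ x : V, ⟪φ x, ξ⟫ = ⟪x, N⟫ * (-1) := by
    intro x
    rw [hφ, inner_sub_left, hJs, hJξ, real_inner_smul_left, hNξ]; ring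
  have hφ2 : ∀ x : V, ⟪x, N⟫ = 0 → φ (φ x) = -x + ⟪x, ξ⟫ • ξ := by
    intro x hx
    rw [hφ (φ x), hη, hφξ, hx, hφ x, hη, map_sub, map_smul, hJ2, hJN]
    simp
  have hφs : ∀ x y : V, ⟪x, N⟫ = 0 → ⟪y, N⟫ = 0 → ⟪φ x, y⟫ = -⟪x, φ y⟫ := by
    intro x y hx hy
    have hy' : ⟪N, y⟫ = 0 := by rw [real_inner_comm]; exact hy
    rw [hφ, hφ, inner_sub_left, inner_sub_right, hJs, real_inner_smul_left,
      real_inner_smul_right, hx, hy']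
    ring
  obtain ⟨a, ha⟩ : ∃ a : ℝ, a = ⟪A N, N⟫ := ⟨_, rfl⟩
  obtain ⟨W, hW⟩ : ∃ W : V, W = A N - a • N := ⟨_, rfl⟩
  have hWN : ⟪W, N⟫ = 0 := by
    rw [hW, inner_sub_left, real_inner_smul_left, hNN, ha]; ring
  have hWξ : ⟪W, ξ⟫ = 0 := by
    rw [hW, inner_sub_left, real_inner_smul_left, hNξ, hANξ]; ring
  have hAN : A N = W + a • N := by rw [hW]; abel
  have hAξ : A ξ = φ W - a • ξ := by
    rw [hφ, hη, hWξ, hξ, map_neg, hAJ, neg_neg, hAN, map_add, map_smul]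
    simp
  have hc : ⟪ξ, A ξ⟫ = -a := by
    rw [hAξ, inner_sub_right, real_inner_smul_right, hξξ, real_inner_comm, hφξ, hWN]; ring
  have key : ∀ X : V, ⟪X, N⟫ = 0 → S (φ (S X)) =
      (α / 2) • (φ (S X) + S (φ X)) + φ X - (⟪X, W⟫ • φ W - ⟪X, φ W⟫ • W) := by
    intro X hX
    rw [← sub_eq_zero]
    obtain ⟨D, hD⟩ : ∃ D : V, D = S (φ (S X)) - ((α / 2) • (φ (S X) + S (φ X)) + φ X
      - (⟪X, W⟫ • φ W - ⟪X, φ W⟫ • W)) := ⟨_, rfl⟩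
    rw [← hD]
    have hDN : ⟪D, N⟫ = 0 := by
      rw [hD]
      simp only [inner_sub_left, inner_add_left, real_inner_smul_left, hφN, hWN,
        hST _ (hφN _)]
      ring
    have h := hHopf X D hX hDN
    rw [hc, hη, hη, hAN, hAξ] at h
    simp only [inner_sub_right, inner_add_right, real_inner_smul_right, hX, hDN] at h
    rw [← inner_self_eq_zero (𝕜 := ℝ)]
    nth_rewrite 1 [hD]
    simp only [inner_sub_left, inner_add_left, real_inner_smul_left] at h ⊢
    rw [real_inner_comm D W, real_inner_comm D (φ W)]
    linarith
  intro X hX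
  have hSX := hST X hX
  rw [key X hX, key (φ X) (hφN X)]
  simp only [hφadd, hφsub, hφsmul]
  rw [hφ2 _ hSX, hφ2 X hX, hφ2 W hWN, hWξ, hφs X W hX hWN, hφs X (φ W) hX (hφN W),
    hφ2 W hWN, hWξ, hSsa X ξ hX hξN, hHopfξ]
  simp only [map_add, map_neg, map_smul, hHopfξ, real_inner_smul_right, inner_add_right,
    inner_neg_right]
  module
end

section
/- (Algebraic core of Lemma 4.1 of the paper.) Let Q : T → T be the linear map determined by g(QX, Y) = Ric*(X,Y) for all X, Y ∈ T. If (φ∘S)∘(φ∘S) = (S∘φ)∘(S∘φ) and the star-Ricci operator commutes with φ, i.e. φ∘Q = Q∘φ on T, then AN = g(AN,N)·N with g(AN,N) = ±1; that is, N is an eigenvector of the conjugation A (N is U-principal). -/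
open RealInnerProductSpace

theorem stmt8 {V : Type*} [NormedAddCommGroup V] [InnerProductSpace ℝ V]
    [FiniteDimensional ℝ V]
    (m : ℕ) (hm : 3 ≤ m) (hdim : Module.finrank ℝ V = 2 * m)
    (J : V →ₗ[ℝ] V)
    (hJiso : ∀ x y : V, ⟪J x, J y⟫ = ⟪x, y⟫)
    (hJ2 : ∀ x : V, J (J x) = -x)
    (A : V →ₗ[ℝ] V)
    (hAsa : ∀ x y : V, ⟪A x, y⟫ = ⟪x, A y⟫)
    (hA2 : ∀ x : V, A (A x) = x)
    (hAJ : ∀ x : V, A (J x) = -(J (A x)))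
    (N : V) (hN : ‖N‖ = 1)
    (ξ : V) (hξ : ξ = -(J N))
    (η : V → ℝ) (hη : ∀ X : V, η X = ⟪X, ξ⟫)
    (φ : V → V) (hφ : ∀ X : V, φ X = J X - η X • N)
    (S : V →ₗ[ℝ] V)
    (hST : ∀ X : V, ⟪X, N⟫ = 0 → ⟪S X, N⟫ = 0)
    (hSsa : ∀ X Y : V, ⟪X, N⟫ = 0 → ⟪Y, N⟫ = 0 → ⟪S X, Y⟫ = ⟪X, S Y⟫)
    (hANξ : ⟪A N, ξ⟫ = 0)
    (Ric : V → V → ℝ)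
    (hRic : ∀ X Y : V, ⟪X, N⟫ = 0 → ⟪Y, N⟫ = 0 →
      Ric X Y = -2 * ((m : ℝ) - 1) * ⟪φ (φ X), Y⟫
        - 2 * ⟪A N, X⟫ * ⟪A N, Y⟫ - ⟪φ (S (φ (S X))), Y⟫)
    (Q : V →ₗ[ℝ] V)
    (hQT : ∀ X : V, ⟪X, N⟫ = 0 → ⟪Q X, N⟫ = 0)
    (hQ : ∀ X Y : V, ⟪X, N⟫ = 0 → ⟪Y, N⟫ = 0 → ⟪Q X, Y⟫ = Ric X Y)
    (hsq : ∀ X : V, ⟪X, N⟫ = 0 → φ (S (φ (S X))) = S (φ (S (φ X))))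
    (hcomm : ∀ X : V, ⟪X, N⟫ = 0 → φ (Q X) = Q (φ X)) :
    A N = ⟪A N, N⟫ • N ∧ (⟪A N, N⟫ = 1 ∨ ⟪A N, N⟫ = -1) := by
  have hNN : ⟪N, N⟫ = (1 : ℝ) := by rw [real_inner_self_eq_norm_sq, hN]; norm_num
  have hskew : ∀ x y : V, ⟪J x, y⟫ = -⟪x, J y⟫ := by
    intro x y
    have h := hJiso x (J y)
    rw [hJ2, inner_neg_right] at h
    linarith
  have hJself : ∀ x : V, ⟪x, J x⟫ = 0 := by
    intro x
    have h := hskew x x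
    rw [real_inner_comm] at h
    linarith
  obtain ⟨a, ha⟩ : ∃ a : ℝ, a = ⟪A N, N⟫ := ⟨_, rfl⟩
  obtain ⟨B, hB⟩ : ∃ B : V, B = A N - a • N := ⟨_, rfl⟩
  have hAN : A N = B + a • N := by rw [hB]; abel
  have hBN : ⟪B, N⟫ = 0 := by
    rw [hB, inner_sub_left, inner_smul_left, hNN, ← ha]; simp
  have hNJN : ⟪N, J N⟫ = 0 := hJself N
  have hBJN : ⟪B, J N⟫ = 0 := by
    rw [hξ, inner_neg_right] at hANξ
    rw [hB, inner_sub_left, inner_smul_left, hNJN]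
    linarith
  have hCN : ⟪J B, N⟫ = 0 := by rw [hskew, hBJN, neg_zero]
  have hBC : ⟪B, J B⟫ = 0 := hJself B
  have hφB : φ B = J B := by
    rw [hφ, hη, hξ, inner_neg_right, hBJN]; simp
  have hφC : φ (J B) = -B := by
    rw [hφ, hη, hξ, inner_neg_right, hJiso, hBN, hJ2]; simp
  have hφneg : φ (-B) = -(J B) := by
    rw [hφ, hη, hξ, inner_neg_right, inner_neg_left, hBJN]; simp
  have hNC : ⟪N, J B⟫ = 0 := by rw [real_inner_comm]; exact hCN
  have hφin : ∀ W : V, ⟪φ W, J B⟫ = ⟪W, B⟫ := by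
    intro W
    rw [hφ, inner_sub_left, inner_smul_left, hNC, hJiso]; simp
  have hANB : ⟪A N, B⟫ = ⟪B, B⟫ := by
    rw [hAN, inner_add_left, inner_smul_left, real_inner_comm, real_inner_comm B N, hBN]; simp
  have hANC : ⟪A N, J B⟫ = 0 := by
    rw [hAN, inner_add_left, inner_smul_left, hBC, hNC]; simp
  have h1 := congrArg (fun v => ⟪v, J B⟫) (hcomm B hBN)
  rw [hφin, hφB, hQ _ _ hBN hBN, hQ _ _ hCN hCN, hRic _ _ hBN hBN, hRic _ _ hCN hCN,
    hφB, hφC, hφneg, hANB, hANC, inner_neg_left, inner_neg_left, hJiso, hφin] at h1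
  have h2 := hsq B hBN
  rw [hφB] at h2
  rw [← h2] at h1
  have h3 : ⟪B, B⟫ = (0 : ℝ) := by
    have : ⟪B, B⟫ * ⟪B, B⟫ = (0 : ℝ) := by linarith
    exact mul_self_eq_zero.mp this
  have hB0 : B = 0 := inner_self_eq_zero.mp h3
  rw [hB0, zero_add] at hAN
  rw [← ha]
  refine ⟨hAN, ?_⟩
  have h4 : ⟪A N, A N⟫ = (1 : ℝ) := by rw [hAsa, hA2, hNN]
  rw [hAN, inner_smul_left, inner_smul_right, hNN] at h4
  simp at h4
  exact mul_self_eq_one_iff.mp h4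
end

section
/- Assume AN = N (N is U-principal), S ξ = 0 (i.e. α = 0), and the Hopf identity with α = 0. Then SφSX = φX for all X ∈ T, and Ric*(X,Y) = (2m-1)(g(X,Y) - η(X)η(Y)) for all X, Y ∈ T (equation (20) of the paper); in particular Ric*(X,Y) = (2m-1) g(X,Y) whenever X, Y ∈ T are orthogonal to ξ, so the model is star-Einstein. -/
open RealInnerProductSpace

theorem stmt10 {V : Type*} [NormedAddCommGroup V] [InnerProductSpace ℝ V]
    [FiniteDimensional ℝ V]
    (m : ℕ) (hm : 3 ≤ m) (hdim : Module.finrank ℝ V = 2 * m)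
    (J : V →ₗ[ℝ] V)
    (hJiso : ∀ x y : V, ⟪J x, J y⟫ = ⟪x, y⟫)
    (hJ2 : ∀ x : V, J (J x) = -x)
    (A : V →ₗ[ℝ] V)
    (hAsa : ∀ x y : V, ⟪A x, y⟫ = ⟪x, A y⟫)
    (hA2 : ∀ x : V, A (A x) = x)
    (hAJ : ∀ x : V, A (J x) = -(J (A x)))
    (N : V) (hN : ‖N‖ = 1)
    (ξ : V) (hξ : ξ = -(J N))
    (η : V → ℝ) (hη : ∀ X : V, η X = ⟪X, ξ⟫)
    (φ : V → V) (hφ : ∀ X : V, φ X = J X - η X • N)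
    (S : V →ₗ[ℝ] V)
    (hST : ∀ X : V, ⟪X, N⟫ = 0 → ⟪S X, N⟫ = 0)
    (hSsa : ∀ X Y : V, ⟪X, N⟫ = 0 → ⟪Y, N⟫ = 0 → ⟪S X, Y⟫ = ⟪X, S Y⟫)
    (hAN : A N = N) (hSξ : S ξ = 0)
    (hHopf : ∀ X Y : V, ⟪X, N⟫ = 0 → ⟪Y, N⟫ = 0 →
      2 * ⟪S (φ (S X)), Y⟫ - 2 * ⟪φ X, Y⟫
        + 2 * ⟪X, A N⟫ * ⟪Y, A ξ⟫ - 2 * ⟪Y, A N⟫ * ⟪X, A ξ⟫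
        + 2 * ⟪ξ, A ξ⟫ * (⟪Y, A N⟫ * η X - ⟪X, A N⟫ * η Y) = 0)
    (Ric : V → V → ℝ)
    (hRic : ∀ X Y : V, ⟪X, N⟫ = 0 → ⟪Y, N⟫ = 0 →
      Ric X Y = -2 * ((m : ℝ) - 1) * ⟪φ (φ X), Y⟫
        - 2 * ⟪A N, X⟫ * ⟪A N, Y⟫ - ⟪φ (S (φ (S X))), Y⟫)
    :
    (∀ X : V, ⟪X, N⟫ = 0 → S (φ (S X)) = φ X) ∧
    (∀ X Y : V, ⟪X, N⟫ = 0 → ⟪Y, N⟫ = 0 →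
      Ric X Y = (2 * (m : ℝ) - 1) * (⟪X, Y⟫ - η X * η Y)) ∧
    (∀ X Y : V, ⟪X, N⟫ = 0 → ⟪Y, N⟫ = 0 → ⟪X, ξ⟫ = 0 → ⟪Y, ξ⟫ = 0 →
      Ric X Y = (2 * (m : ℝ) - 1) * ⟪X, Y⟫) := by
  have hNN : ⟪N, N⟫ = (1 : ℝ) := by
    rw [real_inner_self_eq_norm_sq, hN]; norm_num
  have hJN : J N = -ξ := by rw [hξ, neg_neg]
  have hφT : ∀ X : V, ⟪φ X, N⟫ = 0 := by
    intro X
    have h1 : ⟪J X, N⟫ = ⟪X, ξ⟫ := by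
      rw [← hJiso (J X) N, hJ2, hJN, inner_neg_neg]
    rw [hφ, inner_sub_left, real_inner_smul_left, hNN, h1, hη]; ring
  have key : ∀ X : V, ⟪X, N⟫ = 0 → S (φ (S X)) = φ X := by
    intro X hX
    have hZ : ⟪S (φ (S X)) - φ X, N⟫ = 0 := by
      rw [inner_sub_left, hST _ (hφT _), hφT, sub_zero]
    have h := hHopf X _ hX hZ
    rw [hAN, hX, hZ] at h
    rw [← sub_eq_zero, ← inner_self_eq_zero (𝕜 := ℝ), inner_sub_left]
    linarith
  have hφφ : ∀ X Y : V, ⟪Y, N⟫ = 0 → ⟪φ (φ X), Y⟫ = -(⟪X, Y⟫ - η X * η Y) := by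
    intro X Y hY
    have hY' : ⟪N, Y⟫ = 0 := by rw [real_inner_comm]; exact hY
    rw [hφ (φ X), inner_sub_left, real_inner_smul_left, hY', hφ X, map_sub, map_smul, hJ2, hJN,
      inner_sub_left, real_inner_smul_left, inner_neg_left, inner_neg_left, hη Y,
      real_inner_comm Y ξ]
    ring
  have hR : ∀ X Y : V, ⟪X, N⟫ = 0 → ⟪Y, N⟫ = 0 →
      Ric X Y = (2 * (m : ℝ) - 1) * (⟪X, Y⟫ - η X * η Y) := by
    intro X Y hX hY
    have hX' : ⟪N, X⟫ = 0 := by rw [real_inner_comm]; exact hX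
    rw [hRic X Y hX hY, key X hX, hφφ X Y hY, hAN, hX']
    ring
  refine ⟨key, hR, ?_⟩
  intro X Y hX hY hXξ _
  rw [hR X Y hX hY, hη X, hXξ]
  ring
end

section
/- (Algebraic core of Proposition 6.2 of the paper.) Assume Sξ = αξ for a real number α, and define Q := (1/2)(S∘φ - φ∘S) : T → T. Then φ∘Q + Q∘φ = 0 on T; that is, the star-Ricci operator of a star-Ricci soliton with potential ξ anti-commutes with φ. -/
open RealInnerProductSpace

theorem stmt12 {V : Type*} [NormedAddCommGroup V] [InnerProductSpace ℝ V]
    [FiniteDimensional ℝ V]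
    (m : ℕ) (hm : 3 ≤ m) (hdim : Module.finrank ℝ V = 2 * m)
    (J : V →ₗ[ℝ] V)
    (hJiso : ∀ x y : V, ⟪J x, J y⟫ = ⟪x, y⟫)
    (hJ2 : ∀ x : V, J (J x) = -x)
    (N : V) (hN : ‖N‖ = 1)
    (ξ : V) (hξ : ξ = -(J N))
    (η : V → ℝ) (hη : ∀ X : V, η X = ⟪X, ξ⟫)
    (φ : V → V) (hφ : ∀ X : V, φ X = J X - η X • N)
    (S : V →ₗ[ℝ] V)
    (hST : ∀ X : V, ⟪X, N⟫ = 0 → ⟪S X, N⟫ = 0)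
    (hSsa : ∀ X Y : V, ⟪X, N⟫ = 0 → ⟪Y, N⟫ = 0 → ⟪S X, Y⟫ = ⟪X, S Y⟫)
    (α : ℝ) (hHopfξ : S ξ = α • ξ)
    (Q : V → V) (hQ : ∀ X : V, Q X = (1 / 2 : ℝ) • (S (φ X) - φ (S X))) :
    ∀ X : V, ⟪X, N⟫ = 0 → φ (Q X) + Q (φ X) = 0 := by
  have hNJ : ⟪N, J N⟫ = (0:ℝ) := by
    have h := hJiso N (J N)
    rw [hJ2, inner_neg_right, real_inner_comm] at h
    linarith
  have hξN : ⟪ξ, N⟫ = (0:ℝ) := by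
    rw [hξ, inner_neg_left, real_inner_comm, hNJ, neg_zero]
  have hadd : ∀ X Y : V, φ (X - Y) = φ X - φ Y := by
    intro X Y
    simp only [hφ, hη, map_sub, inner_sub_left, sub_smul]
    abel
  have hsmul : ∀ (c : ℝ) (X : V), φ (c • X) = c • φ X := by
    intro c X
    simp only [hφ, hη, map_smul, real_inner_smul_left, smul_sub, smul_smul]
  have hφφ : ∀ X : V, ⟪X, N⟫ = (0:ℝ) → φ (φ X) = -X + η X • ξ := by
    intro X hX
    have h0 : η (φ X) = 0 := by
      rw [hη, hφ, hξ, inner_neg_right, inner_sub_left, hJiso, hX, real_inner_smul_left, hNJ]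
      simp
    rw [hφ (φ X), h0, hφ X, map_sub, map_smul, hJ2, hξ]
    simp [sub_eq_add_neg]
  intro X hX
  have hηS : η (S X) = α * η X := by
    rw [hη, hη, hSsa X ξ hX hξN, hHopfξ, real_inner_smul_right]
  rw [hQ, hQ, hsmul, hadd, hφφ (S X) (hST X hX), hφφ X hX, hηS, map_add, map_smul, hHopfξ,
    map_neg]
  module
end

section
/- (Algebraic core of Lemma 6.3 of the paper.) Let α be a real number and suppose g(SX, φ(SY)) = α g(SX, φY) for all X, Y ∈ T. Then α·(S∘φ - φ∘S) = 0 on T; that is, either α = 0 or S commutes with φ (the Reeb flow is isometric). -/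
open RealInnerProductSpace

theorem stmt13 {V : Type*} [NormedAddCommGroup V] [InnerProductSpace ℝ V]
    [FiniteDimensional ℝ V]
    (m : ℕ) (hm : 3 ≤ m) (hdim : Module.finrank ℝ V = 2 * m)
    (J : V →ₗ[ℝ] V)
    (hJiso : ∀ x y : V, ⟪J x, J y⟫ = ⟪x, y⟫)
    (hJ2 : ∀ x : V, J (J x) = -x)
    (N : V) (hN : ‖N‖ = 1)
    (ξ : V) (hξ : ξ = -(J N))
    (η : V → ℝ) (hη : ∀ X : V, η X = ⟪X, ξ⟫)
    (φ : V → V) (hφ : ∀ X : V, φ X = J X - η X • N)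
    (S : V →ₗ[ℝ] V)
    (hST : ∀ X : V, ⟪X, N⟫ = 0 → ⟪S X, N⟫ = 0)
    (hSsa : ∀ X Y : V, ⟪X, N⟫ = 0 → ⟪Y, N⟫ = 0 → ⟪S X, Y⟫ = ⟪X, S Y⟫)
    (α : ℝ)
    (h : ∀ X Y : V, ⟪X, N⟫ = 0 → ⟪Y, N⟫ = 0 →
      ⟪S X, φ (S Y)⟫ = α * ⟪S X, φ Y⟫) :
    ∀ X : V, ⟪X, N⟫ = 0 → α • (S (φ X) - φ (S X)) = 0 := by
  have hJs : ∀ x y : V, ⟪J x, y⟫ = -⟪x, J y⟫ := by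
    intro x y
    rw [← hJiso (J x) y, hJ2, inner_neg_left]
  have hNN : ⟪N, N⟫ = 1 := by
    rw [real_inner_self_eq_norm_sq, hN]; norm_num
  have hφT : ∀ X : V, ⟪φ X, N⟫ = 0 := by
    intro X
    rw [hφ, hη, hξ, inner_sub_left, inner_smul_left, hNN, hJs, inner_neg_right]
    simp
  have hsk : ∀ X Y : V, ⟪X, N⟫ = 0 → ⟪Y, N⟫ = 0 → ⟪φ X, Y⟫ = -⟪X, φ Y⟫ := by
    intro X Y hX hY
    have hY' : ⟪N, Y⟫ = 0 := by rw [real_inner_comm]; exact hY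
    rw [hφ, hφ, inner_sub_left, inner_sub_right, inner_smul_left, inner_smul_right, hX, hY', hJs]
    simp
  intro X hX
  have key : ∀ Y : V, ⟪Y, N⟫ = 0 → ⟪α • (S (φ X) - φ (S X)), Y⟫ = 0 := by
    intro Y hY
    have h1 := h Y X hY hX
    have h2 := h X Y hX hY
    have h3 := hsk (S X) (S Y) (hST X hX) (hST Y hY)
    have h4 := hsk (S X) Y (hST X hX) hY
    have h5 := hSsa (φ X) Y (hφT X) hY
    rw [real_inner_comm] at h1
    rw [real_inner_comm (φ X) (S Y)] at h1
    rw [real_inner_smul_left, inner_sub_left, h5, h4]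
    linarith
  refine inner_self_eq_zero (𝕜 := ℝ).mp (key _ ?_)
  rw [real_inner_smul_left, inner_sub_left, hφT, hST _ (hφT X)]
  simp
end

section
/- (Final step of the proof of Theorem 1.4, Section 5 of the paper.) Assume g(AN, N) = 0 and g(AN, ξ) = 0 (N is U-isotropic), Sξ = 0, and that for all X ∈ T one has (2m-1) S(φX) + g(X, AN) S(Aξ) + g(X, Aξ) S(AN) = 0 (equation (26) of the paper). Then S(Aξ) = 0, S(AN) = 0, and in fact S = 0 on all of T. -/
open RealInnerProductSpace

theorem stmt14 {V : Type*} [NormedAddCommGroup V] [InnerProductSpace ℝ V]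
    [FiniteDimensional ℝ V]
    (m : ℕ) (hm : 3 ≤ m) (hdim : Module.finrank ℝ V = 2 * m)
    (J : V →ₗ[ℝ] V)
    (hJiso : ∀ x y : V, ⟪J x, J y⟫ = ⟪x, y⟫)
    (hJ2 : ∀ x : V, J (J x) = -x)
    (A : V →ₗ[ℝ] V)
    (hAsa : ∀ x y : V, ⟪A x, y⟫ = ⟪x, A y⟫)
    (hA2 : ∀ x : V, A (A x) = x)
    (hAJ : ∀ x : V, A (J x) = -(J (A x)))
    (N : V) (hN : ‖N‖ = 1)
    (ξ : V) (hξ : ξ = -(J N))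
    (η : V → ℝ) (hη : ∀ X : V, η X = ⟪X, ξ⟫)
    (φ : V → V) (hφ : ∀ X : V, φ X = J X - η X • N)
    (S : V →ₗ[ℝ] V)
    (hST : ∀ X : V, ⟪X, N⟫ = 0 → ⟪S X, N⟫ = 0)
    (hSsa : ∀ X Y : V, ⟪X, N⟫ = 0 → ⟪Y, N⟫ = 0 → ⟪S X, Y⟫ = ⟪X, S Y⟫)
    (hANN : ⟪A N, N⟫ = 0) (hANξ : ⟪A N, ξ⟫ = 0) (hSξ : S ξ = 0)
    (h26 : ∀ X : V, ⟪X, N⟫ = 0 →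
      (2 * (m : ℝ) - 1) • S (φ X) + ⟪X, A N⟫ • S (A ξ) + ⟪X, A ξ⟫ • S (A N) = 0) :
    S (A ξ) = 0 ∧ S (A N) = 0 ∧ (∀ X : V, ⟪X, N⟫ = 0 → S X = 0) := by
  have hm' : (3 : ℝ) ≤ m := by exact_mod_cast hm
  have hNN : ⟪N, N⟫ = 1 := by rw [real_inner_self_eq_norm_sq, hN]; norm_num
  have hJN : J N = -ξ := by rw [hξ, neg_neg]
  have hJξ : J ξ = N := by rw [hξ, map_neg, hJ2, neg_neg]
  have hξξ : ⟪ξ, ξ⟫ = 1 := by rw [hξ, inner_neg_neg, hJiso, hNN]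
  have hJadj : ∀ Y : V, ⟪J Y, N⟫ = ⟪Y, ξ⟫ := by
    intro Y
    rw [← hJξ, hJiso]
  have hJadj2 : ∀ Y : V, ⟪J Y, ξ⟫ = -⟪Y, N⟫ := by
    intro Y
    rw [hξ, inner_neg_right, hJiso]
  have hNξ : ⟪N, ξ⟫ = 0 := by
    have h1 := hJadj2 ξ
    have h2 := hJadj ξ
    have h3 := hJadj N
    rw [hJN, inner_neg_left, real_inner_comm] at h3
    linarith
  have hAξ : A ξ = J (A N) := by rw [hξ, map_neg, hAJ, neg_neg]
  have hAiso : ∀ x y : V, ⟪A x, A y⟫ = ⟪x, y⟫ := by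
    intro x y
    rw [hAsa, hA2]
  have hAξN : ⟪A ξ, N⟫ = 0 := by rw [hAξ, hJadj, hANξ]
  have hAξξ : ⟪A ξ, ξ⟫ = 0 := by rw [hAξ, hJadj2, hANN, neg_zero]
  have e1 : S (A ξ) = 0 := by
    have h := h26 (A N) hANN
    rw [hφ, hη, hANξ, zero_smul, sub_zero, ← hAξ, hAiso, hAiso, hNN, hNξ, zero_smul, add_zero,
      ← add_smul] at h
    exact (smul_eq_zero.mp h).resolve_left (by linarith)
  have e2 : S (A N) = 0 := by
    have h := h26 (A ξ) hAξN
    rw [hφ, hη, hAξξ, zero_smul, sub_zero, e1, smul_zero, add_zero, hAiso, hξξ, hAξ, hJ2,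
      map_neg, smul_neg, ← neg_smul, ← add_smul] at h
    exact (smul_eq_zero.mp h).resolve_left (by linarith)
  refine ⟨e1, e2, fun Y hY => ?_⟩
  have hX : ⟪J Y - ⟪Y, ξ⟫ • N, N⟫ = 0 := by
    rw [inner_sub_left, hJadj, real_inner_smul_left, hNN]; ring
  have hX2 : ⟪J Y - ⟪Y, ξ⟫ • N, ξ⟫ = 0 := by
    rw [inner_sub_left, hJadj2, real_inner_smul_left, hNξ, hY]; ring
  have h := h26 _ hX
  rw [e1, e2, smul_zero, smul_zero, add_zero, add_zero, hφ, hη, hX2, zero_smul, sub_zero,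
    map_sub, hJ2, map_smul, hJN, map_sub, map_smul, map_neg, map_neg, hSξ, neg_zero, smul_zero,
    sub_zero] at h
  exact neg_eq_zero.mp ((smul_eq_zero.mp h).resolve_left (by linarith))
end

section
/- (Identity used in Section 5 of the paper.) Assume g(AN, N) = 0 and g(AN, ξ) = 0 (N is U-isotropic), Sξ = αξ for a real number α, and equation (23) of the paper: SφSX = (α/2)(φS + Sφ)X + φX - g(X, AN)·Aξ + g(X, Aξ)·AN for all X ∈ T. Then SφSX + φSφSφX = 0 for all X ∈ T. -/
open RealInnerProductSpace

theorem stmt15 {V : Type*} [NormedAddCommGroup V] [InnerProductSpace ℝ V]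
    [FiniteDimensional ℝ V]
    (m : ℕ) (hm : 3 ≤ m) (hdim : Module.finrank ℝ V = 2 * m)
    (J : V →ₗ[ℝ] V)
    (hJiso : ∀ x y : V, ⟪J x, J y⟫ = ⟪x, y⟫)
    (hJ2 : ∀ x : V, J (J x) = -x)
    (A : V →ₗ[ℝ] V)
    (hAsa : ∀ x y : V, ⟪A x, y⟫ = ⟪x, A y⟫)
    (hA2 : ∀ x : V, A (A x) = x)
    (hAJ : ∀ x : V, A (J x) = -(J (A x)))
    (N : V) (hN : ‖N‖ = 1)
    (ξ : V) (hξ : ξ = -(J N))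
    (η : V → ℝ) (hη : ∀ X : V, η X = ⟪X, ξ⟫)
    (φ : V → V) (hφ : ∀ X : V, φ X = J X - η X • N)
    (S : V →ₗ[ℝ] V)
    (hST : ∀ X : V, ⟪X, N⟫ = 0 → ⟪S X, N⟫ = 0)
    (hSsa : ∀ X Y : V, ⟪X, N⟫ = 0 → ⟪Y, N⟫ = 0 → ⟪S X, Y⟫ = ⟪X, S Y⟫)
    (hANN : ⟪A N, N⟫ = 0) (hANξ : ⟪A N, ξ⟫ = 0)
    (α : ℝ) (hHopfξ : S ξ = α • ξ)
    (h23 : ∀ X : V, ⟪X, N⟫ = 0 →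
      S (φ (S X)) = (α / 2) • (φ (S X) + S (φ X)) + φ X
        - ⟪X, A N⟫ • A ξ + ⟪X, A ξ⟫ • A N) :
    ∀ X : V, ⟪X, N⟫ = 0 → S (φ (S X)) + φ (S (φ (S (φ X)))) = 0 := by
  have hNN : ⟪N, N⟫ = 1 := by rw [real_inner_self_eq_norm_sq, hN]; norm_num
  have hJsk : ∀ x y : V, ⟪J x, y⟫ = -⟪x, J y⟫ := by
    intro x y
    have h := hJiso x (J y)
    rw [hJ2, inner_neg_right] at h
    linarith
  have hNξ : ⟪N, ξ⟫ = 0 := by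
    have h := hJsk N N
    rw [hξ, inner_neg_right]
    rw [real_inner_comm] at h
    linarith
  have hξN : ⟪ξ, N⟫ = 0 := by rw [real_inner_comm]; exact hNξ
  have hJξ : J ξ = N := by rw [hξ, map_neg, hJ2, neg_neg]
  have hJN : J N = -ξ := by rw [hξ, neg_neg]
  have hξξ : ⟪ξ, ξ⟫ = 1 := by
    rw [← hJiso, hJξ, hNN]
  have hJxξ : ∀ x : V, ⟪J x, ξ⟫ = -⟪x, N⟫ := by
    intro x; rw [hJsk, hJξ]
  have hJxN : ∀ x : V, ⟪J x, N⟫ = ⟪x, ξ⟫ := by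
    intro x; rw [hJsk, hJN, inner_neg_right, neg_neg]
  have hφadd : ∀ x y : V, φ (x + y) = φ x + φ y := by
    intro x y
    simp only [hφ, hη, map_add, inner_add_left, add_smul]; abel
  have hφsmul : ∀ (c : ℝ) (x : V), φ (c • x) = c • φ x := by
    intro c x
    simp only [hφ, hη, map_smul, real_inner_smul_left, smul_sub, mul_smul]
  have hφsub : ∀ x y : V, φ (x - y) = φ x - φ y := by
    intro x y
    simp only [hφ, hη, map_sub, inner_sub_left, sub_smul]; abel
  have hφT : ∀ x : V, ⟪φ x, N⟫ = 0 := by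
    intro x
    rw [hφ, hη, inner_sub_left, real_inner_smul_left, hNN, hJxN]; ring
  have hφξi : ∀ x : V, ⟪x, N⟫ = 0 → ⟪φ x, ξ⟫ = 0 := by
    intro x hx
    rw [hφ, hη, inner_sub_left, real_inner_smul_left, hNξ, hJxξ, hx]; ring
  have hφξ : φ ξ = 0 := by
    rw [hφ, hη, hJξ, hξξ, one_smul, sub_self]
  have hφφ : ∀ x : V, ⟪x, N⟫ = 0 → φ (φ x) = ⟪x, ξ⟫ • ξ - x := by
    intro x hx
    rw [hφ (φ x), hη, hφξi x hx, hφ x, hη, map_sub, map_smul, hJ2, hJN, zero_smul, smul_neg]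
    abel
  have hAξ : A ξ = J (A N) := by rw [hξ, map_neg, hAJ, neg_neg]
  have hφAN : φ (A N) = A ξ := by
    rw [hφ, hη, hANξ, zero_smul, sub_zero, hAξ]
  have hφAξ : φ (A ξ) = -A N := by
    rw [← hφAN, hφφ _ hANN, hANξ, zero_smul, zero_sub]
  have hAξN : ⟪N, A ξ⟫ = 0 := by rw [← hAsa]; exact hANξ
  have hNAN : ⟪N, A N⟫ = 0 := by rw [← hAsa]; exact hANN
  intro X hX
  have e1 : ⟪φ X, A N⟫ = -⟪X, A ξ⟫ := by
    rw [hφ, inner_sub_left, real_inner_smul_left, hNAN, hJsk, hAξ]; ring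
  have e2 : ⟪φ X, A ξ⟫ = ⟪X, A N⟫ := by
    rw [hφ, inner_sub_left, real_inner_smul_left, hAξN, hAξ, hJiso]; ring
  have e3 : φ (φ (S (φ X))) = -S (φ X) := by
    rw [hφφ _ (hST _ (hφT X)), hSsa _ _ (hφT X) hξN, hHopfξ, real_inner_smul_right,
      hφξi X hX, mul_zero, zero_smul, zero_sub]
  have e4 : φ (S (φ (φ X))) = -φ (S X) := by
    rw [hφφ X hX, map_sub, map_smul, hHopfξ, hφsub, hφsmul, hφsmul, hφξ]
    simp
  have e5 : φ (φ (φ X)) = -φ X := by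
    rw [hφφ _ (hφT X), hφξi X hX, zero_smul, zero_sub]
  rw [h23 (φ X) (hφT X), h23 X hX, e1, e2]
  simp only [hφadd, hφsub, hφsmul, e3, e4, e5, hφAN, hφAξ]
  module
end

section
/- (Algebraic core of Case II in the proof of Theorem 1.6, Section 6 of the paper.) Assume g(AN, N) = 0 and g(AN, ξ) = 0 (N is U-isotropic). Then there is no self-adjoint linear map S : T → T satisfying simultaneously: Sξ = 0, SφSX = 0 for all X ∈ T, and the Hopf identity with α = 0, namely 2 g(SφSX, Y) - 2 g(φX, Y) + 2 g(X, AN) g(Y, Aξ) - 2 g(Y, AN) g(X, Aξ) + 2 g(ξ, Aξ)(g(Y, AN) η(X) - g(X, AN) η(Y)) = 0 for all X, Y ∈ T. (Indeed, these conditions would force g(φX, Y) = g(X,AN)g(Y,Aξ) - g(Y,AN)g(X,Aξ) for all X, Y ∈ T, which is impossible since m ≥ 3.) -/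
open RealInnerProductSpace

theorem stmt16 {V : Type*} [NormedAddCommGroup V] [InnerProductSpace ℝ V]
    [FiniteDimensional ℝ V]
    (m : ℕ) (hm : 3 ≤ m) (hdim : Module.finrank ℝ V = 2 * m)
    (J : V →ₗ[ℝ] V)
    (hJiso : ∀ x y : V, ⟪J x, J y⟫ = ⟪x, y⟫)
    (hJ2 : ∀ x : V, J (J x) = -x)
    (A : V →ₗ[ℝ] V)
    (hAsa : ∀ x y : V, ⟪A x, y⟫ = ⟪x, A y⟫)
    (hA2 : ∀ x : V, A (A x) = x)
    (hAJ : ∀ x : V, A (J x) = -(J (A x)))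
    (N : V) (hN : ‖N‖ = 1)
    (ξ : V) (hξ : ξ = -(J N))
    (η : V → ℝ) (hη : ∀ X : V, η X = ⟪X, ξ⟫)
    (φ : V → V) (hφ : ∀ X : V, φ X = J X - η X • N)
    (hANN : ⟪A N, N⟫ = 0) (hANξ : ⟪A N, ξ⟫ = 0) :
    ¬ ∃ S : V →ₗ[ℝ] V,
      (∀ X : V, ⟪X, N⟫ = 0 → ⟪S X, N⟫ = 0) ∧
      (∀ X Y : V, ⟪X, N⟫ = 0 → ⟪Y, N⟫ = 0 → ⟪S X, Y⟫ = ⟪X, S Y⟫) ∧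
      S ξ = 0 ∧
      (∀ X : V, ⟪X, N⟫ = 0 → S (φ (S X)) = 0) ∧
      (∀ X Y : V, ⟪X, N⟫ = 0 → ⟪Y, N⟫ = 0 →
        2 * ⟪S (φ (S X)), Y⟫ - 2 * ⟪φ X, Y⟫
          + 2 * ⟪X, A N⟫ * ⟪Y, A ξ⟫ - 2 * ⟪Y, A N⟫ * ⟪X, A ξ⟫
          + 2 * ⟪ξ, A ξ⟫ * (⟪Y, A N⟫ * η X - ⟪X, A N⟫ * η Y) = 0) := by
  rintro ⟨S, -, -, -, hS, hH⟩
  let f : V →ₗ[ℝ] (Fin 4 → ℝ) :=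
    LinearMap.pi ![(innerₗ V N), (innerₗ V ξ), (innerₗ V (A N)), (innerₗ V (A ξ))]
  have hker : LinearMap.ker f ≠ ⊥ := by
    apply LinearMap.ker_ne_bot_of_finrank_lt
    rw [hdim, Module.finrank_fin_fun]
    omega
  obtain ⟨X, hX, hX0⟩ := (Submodule.ne_bot_iff _).1 hker
  have hf : f X = 0 := hX
  have h0 : ⟪X, N⟫ = 0 := by
    rw [real_inner_comm]; exact congrFun hf 0
  have h1 : ⟪X, ξ⟫ = 0 := by
    rw [real_inner_comm]; exact congrFun hf 1
  have h2 : ⟪X, A N⟫ = 0 := by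
    rw [real_inner_comm]; exact congrFun hf 2
  have h3 : ⟪X, A ξ⟫ = 0 := by
    rw [real_inner_comm]; exact congrFun hf 3
  have hY : ⟪J X, N⟫ = 0 := by
    rw [← hJiso, hJ2, inner_neg_left, ← inner_neg_right, ← hξ, h1]
  have h := hH X (J X) h0 hY
  have he : η X = 0 := by rw [hη, h1]
  rw [hS X h0, hφ X, he, h2, h3, zero_smul, sub_zero, hJiso, inner_zero_left] at h
  apply hX0
  rw [← inner_self_eq_zero (𝕜 := ℝ)]
  linarith
end
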